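/- With notation as in the Ihara action: for any ψ with zero constant term and any series H, Exp(ψ) ⊛ H = exp(s_ψ)(H), where G ⊛ H := G · κ_G(H), κ_G is the continuous algebra endomorphism with κ_G(x₀) = x₀ and κ_G(x_σ) = t_σ(G)^{-1} x_σ t_σ(G), s_ψ(φ) = ψφ + d_ψ(φ), and Exp is the exponential for the group law ⊛. -/

import Mathlib

/- Noncommutative formal power series over the alphabet X_Γ = {x₀} ∪ {x_σ : σ ∈ Γ},
modelled as coefficient functions `List (Option Γ) → k` (none = x₀, some σ = x_σ). -/

open Finset

/-- Noncommutative series: a coefficient for each word. -/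
abbrev Ser (X k : Type) : Type := List X → k

/-- The finset of all words of length at most `L` over a finite alphabet. -/
def wordsLe (X : Type) [Fintype X] [DecidableEq X] (L : ℕ) : Finset (List X) :=
  (Finset.range (L + 1)).biUnion fun n =>
    (Fintype.piFinset fun _ : Fin n => (Finset.univ : Finset X)).image List.ofFn

/-- The unit series 1. -/
def sone {X k : Type} [CommRing k] : Ser X k := fun w =>
  match w with
  | [] => 1
  | _ => 0

/-- Product of noncommutative series (Cauchy product over factorizations of a word). -/
def smul2 {X k : Type} [CommRing k] (F G : Ser X k) : Ser X k := fun w =>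
  ∑ p ∈ Finset.range (w.length + 1), F (w.take p) * G (w.drop p)

/-- The series given by a single word with coefficient 1. -/
def monom {X k : Type} [CommRing k] [DecidableEq X] (v : List X) : Ser X k :=
  fun w => if w = v then 1 else 0

/-- The automorphism t_σ of `k⟨⟨X_Γ⟩⟩` fixing x₀ and sending x_τ to x_{στ},
acting on series. -/
def tser {Γ k : Type} [CommGroup Γ] [CommRing k] (σ : Γ) (F : Ser (Option Γ) k) :
    Ser (Option Γ) k :=
  fun w => F (w.map (Option.map (fun τ => σ⁻¹ * τ)))

/-- The value of the special derivation d_ψ on the letters: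
`d_ψ(x₀) = 0` and `d_ψ(x_σ) = [x_σ, t_σ(ψ)]`. -/
def dlet {Γ k : Type} [CommGroup Γ] [DecidableEq Γ] [CommRing k]
    (ψ : Ser (Option Γ) k) : Option Γ → Ser (Option Γ) k
  | none => fun _ => 0
  | some σ => fun w =>
      smul2 (monom [some σ]) (tser σ ψ) w - smul2 (tser σ ψ) (monom [some σ]) w

/-- The special derivation d_ψ evaluated on a single word. -/
def dword {Γ k : Type} [CommGroup Γ] [DecidableEq Γ] [CommRing k]
    (ψ : Ser (Option Γ) k) (w : List (Option Γ)) : Ser (Option Γ) k := fun u =>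
  ∑ i ∈ Finset.range w.length,
    smul2 (monom (w.take i)) (smul2 (dlet ψ (w.getD i none)) (monom (w.drop (i + 1)))) u

/-- The (Γ-equivariant) special derivation d_ψ of `k⟨⟨X_Γ⟩⟩`, with
`d_ψ(x₀) = 0` and `d_ψ(x_σ) = [x_σ, t_σ(ψ)]`, applied to a series. -/
def dser {Γ k : Type} [CommGroup Γ] [Fintype Γ] [DecidableEq Γ] [CommRing k]
    (ψ F : Ser (Option Γ) k) : Ser (Option Γ) k := fun u =>
  ∑ w ∈ wordsLe (Option Γ) u.length, F w * dword ψ w u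

/-- The tangential action operator `s_ψ(φ) = ψ·φ + d_ψ(φ)`. -/
def sact {Γ k : Type} [CommGroup Γ] [Fintype Γ] [DecidableEq Γ] [CommRing k]
    (ψ F : Ser (Option Γ) k) : Ser (Option Γ) k := fun u =>
  smul2 ψ F u + dser ψ F u

/-- The Ihara bracket `⟨ψ₁, ψ₂⟩ := s_{ψ₁}(ψ₂) − s_{ψ₂}(ψ₁)`. -/
def ibr {Γ k : Type} [CommGroup Γ] [Fintype Γ] [DecidableEq Γ] [CommRing k]
    (ψ₁ ψ₂ : Ser (Option Γ) k) : Ser (Option Γ) k := fun u =>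
  sact ψ₁ ψ₂ u - sact ψ₂ ψ₁ u

/-- The exponential `exp(s_ψ)` of the tangential action operator, applied to a series.
Since `ψ` has zero constant term, `s_ψ` raises the weight, so the coefficient of a word
`u` in `exp(s_ψ)(H)` only involves finitely many terms of the exponential series. -/
def expS {Γ k : Type} [CommGroup Γ] [Fintype Γ] [DecidableEq Γ] [CommRing k] [Algebra ℚ k]
    (ψ H : Ser (Option Γ) k) : Ser (Option Γ) k := fun u =>
  ∑ n ∈ Finset.range (u.length + 1),
    algebraMap ℚ k ((n.factorial : ℚ))⁻¹ * ((sact ψ)^[n] H) u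

/-- Inverse of a series with constant term 1. -/
def sinv {X k : Type} [CommRing k] (G : Ser X k) : List X → k
  | [] => 1
  | a :: w => - ∑ p ∈ Finset.range (w.length + 1),
      G (a :: w.take p) * sinv G (w.drop p)
  termination_by w => w.length
  decreasing_by simp only [List.length_drop, List.length_cons]; omega

/-- The image of the letters under the endomorphism κ_G :
`κ_G(x₀) = x₀` and `κ_G(x_σ) = t_σ(G)⁻¹ x_σ t_σ(G)`. -/
def kletter {Γ k : Type} [CommGroup Γ] [Fintype Γ] [DecidableEq Γ] [CommRing k]
    (G : Ser (Option Γ) k) : Option Γ → Ser (Option Γ) k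
  | none => monom [none]
  | some σ => smul2 (sinv (tser σ G)) (smul2 (monom [some σ]) (tser σ G))

/-- Product of a list of series. -/
def wordProd {X k : Type} [CommRing k] : List (Ser X k) → Ser X k
  | [] => sone
  | F :: L => smul2 F (wordProd L)

/-- The continuous algebra endomorphism κ_G applied to a series. -/
def kappa {Γ k : Type} [CommGroup Γ] [Fintype Γ] [DecidableEq Γ] [CommRing k]
    (G F : Ser (Option Γ) k) : Ser (Option Γ) k :=
  fun u => ∑ w ∈ wordsLe (Option Γ) u.length, F w * wordProd (w.map (kletter G)) u

/-- The twisted (Ihara) product `G ⊛ H = G · κ_G(H)`. -/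
def mulMT {Γ k : Type} [CommGroup Γ] [Fintype Γ] [DecidableEq Γ] [CommRing k]
    (G H : Ser (Option Γ) k) : Ser (Option Γ) k :=
  smul2 G (kappa G H)

namespace Ser

section Product

variable {X k : Type} [CommRing k]

/-- `F` has order at least `n`: its coefficients on words of length `< n` vanish. -/
def OrderGE (n : ℕ) (F : Ser X k) : Prop := ∀ w : List X, w.length < n → F w = 0

/-- The left derivative of a series by a letter. -/
def leftDeriv (a : X) (F : Ser X k) : Ser X k := fun w => F (a :: w)

theorem smul2_nil (F G : Ser X k) : smul2 F G [] = F [] * G [] := by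
  simp [smul2]

theorem smul2_cons (F G : Ser X k) (a : X) (w : List X) :
    smul2 F G (a :: w) = F [] * G (a :: w) + smul2 (leftDeriv a F) G w := by
  rw [smul2, List.length_cons, Finset.sum_range_succ', add_comm]
  rfl

theorem smul2_add_left (F F' G : Ser X k) : smul2 (F + F') G = smul2 F G + smul2 F' G := by
  funext w
  simp [smul2, add_mul, Finset.sum_add_distrib]

theorem smul2_add_right (F G G' : Ser X k) : smul2 F (G + G') = smul2 F G + smul2 F G' := by
  funext w
  simp [smul2, mul_add, Finset.sum_add_distrib]

theorem smul2_smul_left (c : k) (F G : Ser X k) : smul2 (c • F) G = c • smul2 F G := by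
  funext w
  simp [smul2, Finset.mul_sum, mul_assoc]

theorem smul2_smul_right (c : k) (F G : Ser X k) : smul2 F (c • G) = c • smul2 F G := by
  funext w
  simp only [smul2, Finset.mul_sum, Pi.smul_apply, smul_eq_mul]
  exact Finset.sum_congr rfl fun _ _ => by ring

/-- The product of series as a bilinear map. -/
def mulBilin : Ser X k →ₗ[k] Ser X k →ₗ[k] Ser X k :=
  LinearMap.mk₂ k smul2 smul2_add_left smul2_smul_left smul2_add_right smul2_smul_right

@[simp]
theorem mulBilin_apply (F G : Ser X k) : mulBilin F G = smul2 F G := rfl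

theorem smul2_zero_left (G : Ser X k) : smul2 0 G = 0 :=
  LinearMap.map_zero₂ mulBilin G

theorem smul2_sub_left (F F' G : Ser X k) : smul2 (F - F') G = smul2 F G - smul2 F' G :=
  LinearMap.map_sub₂ mulBilin F F' G

theorem leftDeriv_smul2 (a : X) (F G : Ser X k) :
    leftDeriv a (smul2 F G) = F [] • leftDeriv a G + smul2 (leftDeriv a F) G := by
  funext w
  exact smul2_cons F G a w

theorem smul2_assoc (F G K : Ser X k) : smul2 (smul2 F G) K = smul2 F (smul2 G K) := by
  funext w
  induction w generalizing F G with
  | nil => simp only [smul2_nil, mul_assoc]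
  | cons a w ih =>
    rw [smul2_cons, leftDeriv_smul2, smul2_add_left, smul2_smul_left, Pi.add_apply, ih,
      smul2_cons F, smul2_cons G, smul2_nil]
    simp only [Pi.smul_apply, smul_eq_mul]
    ring

theorem sone_smul2 (F : Ser X k) : smul2 sone F = F := by
  funext w
  cases w with
  | nil => simp [smul2_nil, sone]
  | cons a w =>
    have h : leftDeriv a (sone : Ser X k) = 0 := rfl
    simp [smul2_cons, h, smul2_zero_left, sone]

theorem smul2_sone (F : Ser X k) : smul2 F sone = F := by
  funext w
  induction w generalizing F with
  | nil => simp [smul2_nil, sone]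
  | cons a w ih => simp [smul2_cons, ih, leftDeriv, sone]

theorem OrderGE.smul2 {m n : ℕ} {F G : Ser X k} (hF : OrderGE m F) (hG : OrderGE n G) :
    OrderGE (m + n) (smul2 F G) := by
  intro w hw
  refine Finset.sum_eq_zero fun p _ => ?_
  by_cases h : (w.take p).length < m
  · rw [hF _ h, zero_mul]
  · rw [hG _ ?_, mul_zero]
    simp only [List.length_take, List.length_drop] at h ⊢
    omega

theorem OrderGE.mono {m n : ℕ} {F : Ser X k} (hF : OrderGE n F) (h : m ≤ n) : OrderGE m F :=
  fun w hw => hF w (hw.trans_le h)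

theorem OrderGE.add {n : ℕ} {F G : Ser X k} (hF : OrderGE n F) (hG : OrderGE n G) :
    OrderGE n (F + G) := fun w hw => by simp [hF w hw, hG w hw]

theorem OrderGE.sub {n : ℕ} {F G : Ser X k} (hF : OrderGE n F) (hG : OrderGE n G) :
    OrderGE n (F - G) := fun w hw => by simp [hF w hw, hG w hw]

theorem orderGE_zero (F : Ser X k) : OrderGE 0 F := fun _ h => absurd h (Nat.not_lt_zero _)

theorem orderGE_one {F : Ser X k} (h : F [] = 0) : OrderGE 1 F := by
  intro w hw
  rwa [List.length_eq_zero_iff.mp (Nat.lt_one_iff.mp hw)]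

theorem smul2_sinv {G : Ser X k} (hG : G [] = 1) : smul2 G (sinv G) = sone := by
  funext w
  cases w with
  | nil => simp [smul2_nil, sone, hG, sinv]
  | cons a w =>
    rw [smul2_cons, hG, one_mul, sinv]
    exact neg_add_cancel _

theorem sinv_smul2 {G : Ser X k} (hG : G [] = 1) : smul2 (sinv G) G = sone := by
  have h : sinv G [] = 1 := by rw [sinv]
  have h' : G = sinv (sinv G) := by
    have := smul2_assoc G (sinv G) (sinv (sinv G))
    rwa [smul2_sinv h, smul2_sone, smul2_sinv hG, sone_smul2, eq_comm] at this
  calc smul2 (sinv G) G = smul2 (sinv G) (sinv (sinv G)) := congrArg _ h'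
    _ = sone := smul2_sinv h

end Product

section Words

variable {X k : Type} [CommRing k] [DecidableEq X]

theorem monom_nil : (monom [] : Ser X k) = sone := by
  funext w
  cases w <;> simp [monom, sone]

theorem orderGE_monom (v : List X) : OrderGE v.length (monom v : Ser X k) := by
  intro w hw
  rw [monom, if_neg]
  rintro rfl
  exact lt_irrefl _ hw

theorem monom_smul2_monom (v w : List X) :
    smul2 (monom v) (monom w) = (monom (v ++ w) : Ser X k) := by
  funext u
  induction v generalizing u with
  | nil => rw [monom_nil, sone_smul2, List.nil_append]
  | cons a v ih =>
    cases u with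
    | nil => simp [smul2_nil, monom]
    | cons b u =>
      rw [smul2_cons]
      by_cases h : b = a
      · subst h
        have h' : leftDeriv b (monom (b :: v) : Ser X k) = monom v := by
          funext w
          simp [leftDeriv, monom]
        rw [h', ih]
        simp [monom]
      · have h' : leftDeriv b (monom (a :: v) : Ser X k) = 0 := by
          funext w
          simp [leftDeriv, monom, h]
        rw [h', smul2_zero_left]
        simp [monom, h]

variable [Fintype X]

theorem mem_wordsLe {L : ℕ} {w : List X} : w ∈ wordsLe X L ↔ w.length ≤ L := by
  simp only [wordsLe, Finset.mem_biUnion, Finset.mem_range, Finset.mem_image,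
    Fintype.mem_piFinset, Finset.mem_univ, implies_true, true_and]
  constructor
  · rintro ⟨n, hn, f, rfl⟩
    rw [List.length_ofFn]
    omega
  · intro h
    exact ⟨w.length, by omega, w.get, List.ofFn_get w⟩

/-- A linear functional killing series of order `> L` is determined by its values on words. -/
theorem linear_apply_eq_sum (T : Ser X k →ₗ[k] k) {L : ℕ}
    (hT : ∀ F, OrderGE (L + 1) F → T F = 0) (F : Ser X k) :
    T F = ∑ w ∈ wordsLe X L, F w * T (monom w) := by
  have h : T (F - ∑ w ∈ wordsLe X L, F w • monom w) = 0 := by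
    refine hT _ fun u hu => ?_
    have hu' : u ∈ wordsLe X L := mem_wordsLe.mpr (Nat.lt_succ_iff.mp hu)
    simp [monom, Finset.sum_apply, hu']
  rw [map_sub, sub_eq_zero] at h
  rw [h, map_sum]
  simp

/-- Linear operators not lowering the order that agree on words are equal. -/
theorem linearMap_ext {S T : Ser X k →ₗ[k] Ser X k}
    (hS : ∀ n F, OrderGE n F → OrderGE n (S F)) (hT : ∀ n F, OrderGE n F → OrderGE n (T F))
    (h : ∀ w, S (monom w) = T (monom w)) : S = T := by
  refine LinearMap.ext fun F => funext fun u => ?_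
  have key : ∀ R : Ser X k →ₗ[k] Ser X k, (∀ n F, OrderGE n F → OrderGE n (R F)) →
      R F u = ∑ w ∈ wordsLe X u.length, F w * R (monom w) u := fun R hR =>
    linear_apply_eq_sum (LinearMap.proj u ∘ₗ R)
      (fun K hK => hR _ K hK u (Nat.lt_succ_self _)) F
  rw [key S hS, key T hT]
  simp only [h]

end Words

section Exponential

variable {X k : Type} [CommRing k]

/-- The operator `T` raises the order of series. -/
def Raises (T : Ser X k →ₗ[k] Ser X k) : Prop := ∀ n F, OrderGE n F → OrderGE (n + 1) (T F)

theorem Raises.pow {T : Ser X k →ₗ[k] Ser X k} (hT : Raises T) {m : ℕ} {F : Ser X k}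
    (hF : OrderGE m F) (n : ℕ) : OrderGE (n + m) ((T ^ n) F) := by
  induction n with
  | zero => simpa using hF
  | succ n ih =>
    rw [pow_succ', Module.End.mul_apply, Nat.add_right_comm]
    exact hT _ _ ih

theorem pow_smul2 {T S D : Ser X k →ₗ[k] Ser X k}
    (h : ∀ F K, T (smul2 F K) = smul2 (S F) K + smul2 F (D K)) (F K : Ser X k) (n : ℕ) :
    (T ^ n) (smul2 F K) = ∑ ij ∈ Finset.HasAntidiagonal.antidiagonal n,
      n.choose ij.1 • smul2 ((S ^ ij.1) F) ((D ^ ij.2) K) := by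
  induction n with
  | zero => simp
  | succ n ih =>
    rw [Finset.sum_antidiagonal_choose_succ_nsmul
      (fun i j => smul2 ((S ^ i) F) ((D ^ j) K)), pow_succ', Module.End.mul_apply, ih, map_sum,
      ← Finset.sum_add_distrib]
    refine Finset.sum_congr rfl fun ij hij => ?_
    have hsymm : n.choose ij.2 = n.choose ij.1 :=
      (Nat.choose_symm_of_eq_add (Finset.HasAntidiagonal.mem_antidiagonal.mp hij).symm).symm
    rw [map_nsmul, h, hsymm, pow_succ' S, pow_succ' D, Module.End.mul_apply,
      Module.End.mul_apply, nsmul_add, add_comm]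

variable [Algebra ℚ k]

/-- The exponential of an order-raising operator. -/
def expOp (T : Ser X k →ₗ[k] Ser X k) : Ser X k →ₗ[k] Ser X k :=
  LinearMap.pi fun u => ∑ n ∈ Finset.range (u.length + 1),
    algebraMap ℚ k ((n.factorial : ℚ))⁻¹ • (LinearMap.proj u ∘ₗ (T ^ n))

theorem expOp_apply (T : Ser X k →ₗ[k] Ser X k) (F : Ser X k) (u : List X) :
    expOp T F u = ∑ n ∈ Finset.range (u.length + 1),
      algebraMap ℚ k ((n.factorial : ℚ))⁻¹ * (T ^ n) F u := by
  simp only [expOp, LinearMap.pi_apply, LinearMap.sum_apply, LinearMap.smul_apply,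
    LinearMap.comp_apply, LinearMap.proj_apply, smul_eq_mul]

theorem expOp_apply_of_lt {T : Ser X k →ₗ[k] Ser X k} (hT : Raises T) (F : Ser X k)
    {u : List X} {N : ℕ} (hN : u.length < N) :
    expOp T F u = ∑ n ∈ Finset.range N,
      algebraMap ℚ k ((n.factorial : ℚ))⁻¹ * (T ^ n) F u := by
  rw [expOp_apply]
  refine Finset.sum_subset (Finset.range_subset_range.mpr hN) fun n _ hn => ?_
  rw [hT.pow (orderGE_zero F) n u (by simpa using hn), mul_zero]

theorem OrderGE.expOp {T : Ser X k →ₗ[k] Ser X k} (hT : Raises T) (m : ℕ) (F : Ser X k)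
    (hF : OrderGE m F) : OrderGE m (expOp T F) := by
  intro u hu
  rw [expOp_apply]
  exact Finset.sum_eq_zero fun n _ => by
    rw [hT.pow hF n u (by omega), mul_zero]

theorem expOp_of_apply_eq_zero {T : Ser X k →ₗ[k] Ser X k} {F : Ser X k} (h : T F = 0) :
    expOp T F = F := by
  funext u
  rw [expOp_apply, Finset.sum_range_succ', Finset.sum_eq_zero]
  · simp
  · intro n _
    rw [pow_succ, Module.End.mul_apply, h, map_zero, Pi.zero_apply, mul_zero]

/-- If `T (F K) = F (T K)` for all `K`, then `exp T (F K) = F (exp T K)`. -/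
theorem expOp_smul2_of_commute {T : Ser X k →ₗ[k] Ser X k} (hT : Raises T) {F : Ser X k}
    (h : ∀ K, T (smul2 F K) = smul2 F (T K)) (K : Ser X k) :
    expOp T (smul2 F K) = smul2 F (expOp T K) := by
  have hpow : ∀ n, (T ^ n) (smul2 F K) = smul2 F ((T ^ n) K) := by
    intro n
    induction n with
    | zero => rfl
    | succ n ih => rw [pow_succ', Module.End.mul_apply, ih, h, Module.End.mul_apply]
  funext u
  rw [expOp_apply]
  simp only [hpow, smul2, Finset.mul_sum]
  rw [Finset.sum_comm]
  refine Finset.sum_congr rfl fun p _ => ?_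
  rw [expOp_apply_of_lt hT K (N := u.length + 1) (by simp only [List.length_drop]; omega),
    Finset.mul_sum]
  exact Finset.sum_congr rfl fun n _ => by ring

theorem inv_factorial_mul_choose {i j n : ℕ} (h : i + j = n) :
    algebraMap ℚ k ((n.factorial : ℚ))⁻¹ * (n.choose i : k) =
      algebraMap ℚ k ((i.factorial : ℚ))⁻¹ * algebraMap ℚ k ((j.factorial : ℚ))⁻¹ := by
  subst h
  rw [← map_natCast (algebraMap ℚ k), ← map_mul, ← map_mul, Nat.cast_add_choose]
  congr 1
  have := Nat.factorial_ne_zero (i + j)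
  field_simp

/-- Multiplicativity of the exponential for operators satisfying a Leibniz rule. -/
theorem expOp_smul2 {T S D : Ser X k →ₗ[k] Ser X k} (hS : Raises S) (hD : Raises D)
    (h : ∀ F K, T (smul2 F K) = smul2 (S F) K + smul2 F (D K)) (F K : Ser X k) :
    expOp T (smul2 F K) = smul2 (expOp S F) (expOp D K) := by
  funext u
  set N := u.length + 1 with hN
  let c : ℕ → k := fun n => algebraMap ℚ k ((n.factorial : ℚ))⁻¹
  let f : ℕ × ℕ → k := fun ij =>
    c ij.1 * c ij.2 * smul2 ((S ^ ij.1) F) ((D ^ ij.2) K) u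
  have hleft : expOp T (smul2 F K) u =
      ∑ n ∈ Finset.range N, ∑ ij ∈ Finset.HasAntidiagonal.antidiagonal n, f ij := by
    rw [expOp_apply]
    refine Finset.sum_congr rfl fun n _ => ?_
    rw [pow_smul2 h, Finset.sum_apply, Finset.mul_sum]
    refine Finset.sum_congr rfl fun ij hij => ?_
    rw [Pi.smul_apply, nsmul_eq_mul, ← mul_assoc,
      inv_factorial_mul_choose (Finset.HasAntidiagonal.mem_antidiagonal.mp hij)]
  have hright : smul2 (expOp S F) (expOp D K) u =
      ∑ ij ∈ Finset.range N ×ˢ Finset.range N, f ij := by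
    have hterm : ∀ p ∈ Finset.range (u.length + 1),
        expOp S F (u.take p) * expOp D K (u.drop p) =
          ∑ ij ∈ Finset.range N ×ˢ Finset.range N,
            c ij.1 * c ij.2 * ((S ^ ij.1) F (u.take p) * (D ^ ij.2) K (u.drop p)) := by
      intro p _
      rw [expOp_apply_of_lt hS F (N := N) (by simp only [List.length_take]; omega),
        expOp_apply_of_lt hD K (N := N) (by simp only [List.length_drop]; omega),
        Finset.sum_mul_sum, Finset.sum_product]
      exact Finset.sum_congr rfl fun i _ => Finset.sum_congr rfl fun j _ => by ring
    rw [smul2, Finset.sum_congr rfl hterm, Finset.sum_comm]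
    simp only [f, smul2, Finset.mul_sum]
  rw [hleft, hright, Finset.sum_sigma']
  have hzero : ∀ ij : ℕ × ℕ, N ≤ ij.1 + ij.2 → f ij = 0 := by
    intro ij hij
    have := (hS.pow (orderGE_zero F) ij.1).smul2 (hD.pow (orderGE_zero K) ij.2) u (by omega)
    simp only [f, this, mul_zero]
  rw [← Finset.sum_filter_add_sum_filter_not (Finset.range N ×ˢ Finset.range N)
    (fun ij => ij.1 + ij.2 < N) f, Finset.sum_eq_zero (s := Finset.filter (fun ij => ¬ _) _)
    (fun ij hij => hzero ij (not_lt.mp (Finset.mem_filter.mp hij).2)), add_zero]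
  refine Finset.sum_bij' (fun x _ => x.2) (fun ij _ => ⟨ij.1 + ij.2, ij⟩) ?_ ?_ ?_ ?_ ?_
  · rintro ⟨n, i, j⟩ hx
    simp only [Finset.mem_sigma, Finset.mem_range, Finset.HasAntidiagonal.mem_antidiagonal,
      Finset.mem_filter, Finset.mem_product] at hx ⊢
    omega
  · rintro ⟨i, j⟩ hx
    rw [Finset.mem_sigma, Finset.mem_range, Finset.HasAntidiagonal.mem_antidiagonal]
    exact ⟨(Finset.mem_filter.mp hx).2, rfl⟩
  · rintro ⟨n, i, j⟩ hx
    simp only [Finset.mem_sigma, Finset.HasAntidiagonal.mem_antidiagonal] at hx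
    obtain ⟨-, rfl⟩ := hx
    rfl
  · intros
    rfl
  · intros
    rfl

end Exponential

section Twist

variable {Γ k : Type} [CommGroup Γ] [CommRing k]

/-- The action of `t_σ` on series as a linear map. -/
def tserLinear (σ : Γ) : Ser (Option Γ) k →ₗ[k] Ser (Option Γ) k where
  toFun := tser σ
  map_add' _ _ := rfl
  map_smul' _ _ := rfl

@[simp]
theorem tserLinear_apply (σ : Γ) (F : Ser (Option Γ) k) : tserLinear σ F = tser σ F := rfl

theorem tser_smul2 (σ : Γ) (F G : Ser (Option Γ) k) :
    tser σ (smul2 F G) = smul2 (tser σ F) (tser σ G) := by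
  funext w
  simp [tser, smul2, List.map_take, List.map_drop]

theorem tser_tser (σ τ : Γ) (F : Ser (Option Γ) k) : tser σ (tser τ F) = tser (σ * τ) F := by
  funext w
  simp only [tser, List.map_map, Option.map_comp_map]
  congr 3
  funext x
  simp [mul_assoc]

theorem tser_sone (σ : Γ) : tser σ (sone : Ser (Option Γ) k) = sone := by
  funext w
  cases w <;> rfl

theorem OrderGE.tser {n : ℕ} {F : Ser (Option Γ) k} (hF : OrderGE n F) (σ : Γ) :
    OrderGE n (tser σ F) := fun w hw => hF _ (by simpa using hw)

variable [DecidableEq Γ]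

theorem tser_monom (σ : Γ) (v : List (Option Γ)) :
    tser σ (monom v : Ser (Option Γ) k) = monom (v.map (Option.map (σ * ·))) := by
  funext w
  have h : w.map (Option.map (σ⁻¹ * ·)) = v ↔ w = v.map (Option.map (σ * ·)) := by
    constructor
    · rintro rfl
      simp [Function.comp_def]
    · rintro rfl
      simp [Function.comp_def]
  simp only [tser, monom, h]

end Twist

section Derivation

variable {Γ k : Type} [CommGroup Γ] [DecidableEq Γ] [CommRing k]

theorem dlet_some (ψ : Ser (Option Γ) k) (σ : Γ) :
    dlet ψ (some σ) = smul2 (monom [some σ]) (tser σ ψ) - smul2 (tser σ ψ) (monom [some σ]) :=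
  rfl

theorem orderGE_dlet {ψ : Ser (Option Γ) k} (hψ : ψ [] = 0) (a : Option Γ) :
    OrderGE 2 (dlet ψ a) := by
  cases a with
  | none => exact fun _ _ => rfl
  | some σ =>
    have h₁ := orderGE_monom (k := k) [some σ]
    have h₂ := (orderGE_one hψ).tser σ
    exact (h₁.smul2 h₂).sub (h₂.smul2 h₁)

theorem dword_nil (ψ : Ser (Option Γ) k) : dword ψ [] = 0 := by
  funext u
  simp [dword]

theorem dword_cons (ψ : Ser (Option Γ) k) (a : Option Γ) (w : List (Option Γ)) :
    dword ψ (a :: w) = smul2 (dlet ψ a) (monom w) + smul2 (monom [a]) (dword ψ w) := by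
  have h : dword ψ w = ∑ i ∈ Finset.range w.length, smul2 (monom (w.take i))
      (smul2 (dlet ψ (w.getD i none)) (monom (w.drop (i + 1)))) := by
    funext u
    simp [dword, Finset.sum_apply]
  rw [h, ← mulBilin_apply (monom [a]), map_sum]
  funext u
  simp only [dword, List.length_cons, Finset.sum_range_succ', Pi.add_apply, Finset.sum_apply,
    mulBilin_apply, ← smul2_assoc, monom_smul2_monom]
  rw [add_comm]
  simp [monom_nil, sone_smul2]

theorem dword_append (ψ : Ser (Option Γ) k) (v w : List (Option Γ)) :
    dword ψ (v ++ w) = smul2 (dword ψ v) (monom w) + smul2 (monom v) (dword ψ w) := by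
  induction v with
  | nil => rw [List.nil_append, dword_nil, smul2_zero_left, monom_nil, sone_smul2, zero_add]
  | cons a v ih =>
    rw [List.cons_append, dword_cons, ih, dword_cons, smul2_add_left, smul2_add_right,
      smul2_assoc, smul2_assoc, monom_smul2_monom, ← smul2_assoc (monom [a]) (monom v),
      monom_smul2_monom, List.singleton_append, add_assoc]

theorem orderGE_dword {ψ : Ser (Option Γ) k} (hψ : ψ [] = 0) (w : List (Option Γ)) :
    OrderGE (w.length + 1) (dword ψ w) := by
  induction w with
  | nil =>
    rw [dword_nil]
    exact fun _ _ => rfl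
  | cons a w ih =>
    rw [dword_cons]
    refine OrderGE.add (((orderGE_dlet hψ a).smul2 (orderGE_monom w)).mono ?_)
      (((orderGE_monom [a]).smul2 ih).mono ?_)
    all_goals simp only [List.length_cons, List.length_nil]; omega

theorem tser_dlet (σ : Γ) (ψ : Ser (Option Γ) k) (a : Option Γ) :
    tser σ (dlet ψ a) = dlet ψ (a.map (σ * ·)) := by
  cases a with
  | none => rfl
  | some τ =>
    rw [dlet_some, ← tserLinear_apply, map_sub]
    simp only [tserLinear_apply, tser_smul2, tser_tser, tser_monom]
    rfl

theorem tser_dword (σ : Γ) (ψ : Ser (Option Γ) k) (w : List (Option Γ)) :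
    tser σ (dword ψ w) = dword ψ (w.map (Option.map (σ * ·))) := by
  induction w with
  | nil => rw [List.map_nil, dword_nil]; rfl
  | cons a w ih =>
    rw [List.map_cons, dword_cons, dword_cons, ← tserLinear_apply, map_add]
    simp only [tserLinear_apply, tser_smul2, tser_dlet, ih, tser_monom, List.map_cons,
      List.map_nil]

variable [Fintype Γ]

/-- The special derivation `d_ψ` as a linear map. -/
def dserLinear (ψ : Ser (Option Γ) k) : Ser (Option Γ) k →ₗ[k] Ser (Option Γ) k where
  toFun := dser ψ
  map_add' F G := by
    funext u
    simp [dser, add_mul, Finset.sum_add_distrib]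
  map_smul' c F := by
    funext u
    simp [dser, Finset.mul_sum, mul_assoc]

theorem raises_dserLinear {ψ : Ser (Option Γ) k} (hψ : ψ [] = 0) : Raises (dserLinear ψ) := by
  intro n F hF u hu
  refine Finset.sum_eq_zero fun w _ => ?_
  by_cases h : w.length < n
  · rw [hF w h, zero_mul]
  · rw [orderGE_dword hψ w u (by omega), mul_zero]

theorem dserLinear_monom {ψ : Ser (Option Γ) k} (hψ : ψ [] = 0) (w : List (Option Γ)) :
    dserLinear ψ (monom w) = dword ψ w := by
  funext u
  change ∑ v ∈ wordsLe (Option Γ) u.length, monom w v * dword ψ v u = _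
  rw [Finset.sum_eq_single w]
  · simp [monom]
  · intro v _ hv
    simp [monom, hv]
  · intro hw
    rw [mem_wordsLe, not_le] at hw
    rw [orderGE_dword hψ w u (by omega), mul_zero]

theorem dserLinear_sone {ψ : Ser (Option Γ) k} (hψ : ψ [] = 0) : dserLinear ψ sone = 0 := by
  rw [← monom_nil, dserLinear_monom hψ, dword_nil]

theorem dserLinear_smul2 {ψ : Ser (Option Γ) k} (hψ : ψ [] = 0) (F K : Ser (Option Γ) k) :
    dserLinear ψ (smul2 F K) = smul2 (dserLinear ψ F) K + smul2 F (dserLinear ψ K) := by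
  have hd : ∀ n F, OrderGE n F → OrderGE n (dserLinear ψ F) := fun n F hF =>
    (raises_dserLinear hψ n F hF).mono n.le_succ
  have hl : ∀ {n : ℕ} {F : Ser (Option Γ) k} (G : Ser (Option Γ) k), OrderGE n F →
      OrderGE n (smul2 F G) := fun G hF => hF.smul2 (orderGE_zero G)
  have hr : ∀ {n : ℕ} {F : Ser (Option Γ) k} (G : Ser (Option Γ) k), OrderGE n F →
      OrderGE n (smul2 G F) := fun G hF => by simpa using (orderGE_zero G).smul2 hF
  have hword : ∀ (v : List (Option Γ)) (K : Ser (Option Γ) k),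
      dserLinear ψ (smul2 (monom v) K) =
        smul2 (dserLinear ψ (monom v)) K + smul2 (monom v) (dserLinear ψ K) := by
    intro v K
    have := linearMap_ext (S := dserLinear ψ ∘ₗ mulBilin (monom v))
      (T := mulBilin (dserLinear ψ (monom v)) + mulBilin (monom v) ∘ₗ dserLinear ψ)
      (fun n F hF => hd n _ (hr _ hF)) (fun n F hF => (hr _ hF).add (hr _ (hd n F hF)))
      (fun w => by
        simp only [LinearMap.comp_apply, LinearMap.add_apply, mulBilin_apply,
          monom_smul2_monom, dserLinear_monom hψ, dword_append])
    exact LinearMap.congr_fun this K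
  have := linearMap_ext (S := dserLinear ψ ∘ₗ mulBilin.flip K)
    (T := mulBilin.flip K ∘ₗ dserLinear ψ + mulBilin.flip (dserLinear ψ K))
    (fun n F hF => hd n _ (hl _ hF)) (fun n F hF => (hl _ (hd n F hF)).add (hl _ hF))
    (fun v => hword v K)
  exact LinearMap.congr_fun this F

theorem tser_dserLinear {ψ : Ser (Option Γ) k} (hψ : ψ [] = 0) (σ : Γ) (F : Ser (Option Γ) k) :
    tser σ (dserLinear ψ F) = dserLinear ψ (tser σ F) := by
  have hd : ∀ n F, OrderGE n F → OrderGE n (dserLinear ψ F) := fun n F hF =>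
    (raises_dserLinear hψ n F hF).mono n.le_succ
  have := linearMap_ext (S := tserLinear σ ∘ₗ dserLinear ψ) (T := dserLinear ψ ∘ₗ tserLinear σ)
    (fun n F hF => (hd n F hF).tser σ) (fun n F hF => hd n _ (hF.tser σ))
    (fun w => by
      simp only [LinearMap.comp_apply, tserLinear_apply, dserLinear_monom hψ, tser_monom,
        tser_dword])
  exact LinearMap.congr_fun this F

/-- The operator `F ↦ φ F + d_ψ(F)`. -/
def twistedAct (φ ψ : Ser (Option Γ) k) : Ser (Option Γ) k →ₗ[k] Ser (Option Γ) k :=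
  mulBilin φ + dserLinear ψ

theorem twistedAct_apply (φ ψ F : Ser (Option Γ) k) :
    twistedAct φ ψ F = smul2 φ F + dserLinear ψ F := rfl

theorem raises_twistedAct {φ ψ : Ser (Option Γ) k} (hφ : φ [] = 0) (hψ : ψ [] = 0) :
    Raises (twistedAct φ ψ) := fun n F hF =>
  (((orderGE_one hφ).smul2 hF).mono (by omega)).add (raises_dserLinear hψ n F hF)

theorem twistedAct_smul2 {ψ : Ser (Option Γ) k} (hψ : ψ [] = 0) (φ F K : Ser (Option Γ) k) :
    twistedAct φ ψ (smul2 F K) = smul2 (twistedAct φ ψ F) K + smul2 F (dserLinear ψ K) := by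
  rw [twistedAct_apply, twistedAct_apply, dserLinear_smul2 hψ, smul2_add_left, smul2_assoc,
    add_assoc]

theorem twistedAct_letter_smul2 {ψ : Ser (Option Γ) k} (hψ : ψ [] = 0) (σ : Γ)
    (K : Ser (Option Γ) k) :
    twistedAct (tser σ ψ) ψ (smul2 (monom [some σ]) K) =
      smul2 (monom [some σ]) (twistedAct (tser σ ψ) ψ K) := by
  rw [twistedAct_apply, twistedAct_apply, dserLinear_smul2 hψ, dserLinear_monom hψ, dword_cons,
    dword_nil, ← mulBilin_apply (monom [some σ]) 0, map_zero, add_zero, monom_nil, smul2_sone,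
    dlet_some, smul2_sub_left, smul2_add_right, smul2_assoc, smul2_assoc]
  abel

variable [Algebra ℚ k]

theorem expS_eq_expOp (ψ H : Ser (Option Γ) k) : expS ψ H = expOp (twistedAct ψ ψ) H := by
  funext u
  rw [expOp_apply]
  simp only [Module.End.pow_apply]
  rfl

theorem expS_eq_smul2 {ψ : Ser (Option Γ) k} (hψ : ψ [] = 0) (H : Ser (Option Γ) k) :
    expS ψ H = smul2 (expS ψ sone) (expOp (dserLinear ψ) H) := by
  rw [expS_eq_expOp, expS_eq_expOp, ← expOp_smul2 (raises_twistedAct hψ hψ)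
    (raises_dserLinear hψ) (twistedAct_smul2 hψ ψ), sone_smul2]

theorem expS_sone_nil (ψ : Ser (Option Γ) k) : expS ψ sone [] = 1 := by
  simp [expS, sone]

theorem tser_expS_sone {ψ : Ser (Option Γ) k} (hψ : ψ [] = 0) (σ : Γ) :
    tser σ (expS ψ sone) = expOp (twistedAct (tser σ ψ) ψ) sone := by
  have hpow : ∀ n, tser σ ((twistedAct ψ ψ ^ n) sone) =
      (twistedAct (tser σ ψ) ψ ^ n) sone := by
    intro n
    induction n with
    | zero => exact tser_sone σ
    | succ n ih =>
      rw [pow_succ', pow_succ', Module.End.mul_apply, Module.End.mul_apply, ← ih,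
        twistedAct_apply, twistedAct_apply, ← tser_smul2, ← tser_dserLinear hψ]
      rfl
  funext u
  rw [expOp_apply, expS_eq_expOp]
  simp only [← hpow, tser, expOp_apply, List.length_map]

theorem expOp_dserLinear_letter {ψ : Ser (Option Γ) k} (hψ : ψ [] = 0) (a : Option Γ) :
    expOp (dserLinear ψ) (monom [a]) = kletter (expS ψ sone) a := by
  cases a with
  | none =>
    refine expOp_of_apply_eq_zero ?_
    rw [dserLinear_monom hψ, dword_cons, dword_nil, monom_nil, smul2_sone,
      ← mulBilin_apply (monom [none]), map_zero, add_zero]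
    rfl
  | some σ =>
    have hσ : tser σ ψ [] = 0 := hψ
    have hR := raises_twistedAct hσ hψ
    have h : smul2 (tser σ (expS ψ sone)) (expOp (dserLinear ψ) (monom [some σ])) =
        smul2 (monom [some σ]) (tser σ (expS ψ sone)) := by
      rw [tser_expS_sone hψ, ← expOp_smul2 hR (raises_dserLinear hψ) (twistedAct_smul2 hψ _),
        ← expOp_smul2_of_commute hR (twistedAct_letter_smul2 hψ σ), sone_smul2, smul2_sone]
    rw [kletter, ← h, ← smul2_assoc, sinv_smul2 (G := tser σ (expS ψ sone)) (expS_sone_nil ψ),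
      sone_smul2]

theorem expOp_dserLinear_monom {ψ : Ser (Option Γ) k} (hψ : ψ [] = 0) (w : List (Option Γ)) :
    expOp (dserLinear ψ) (monom w) = wordProd (w.map (kletter (expS ψ sone))) := by
  have hR := raises_dserLinear hψ
  induction w with
  | nil =>
    rw [monom_nil]
    exact expOp_of_apply_eq_zero (dserLinear_sone hψ)
  | cons a w ih =>
    rw [← List.singleton_append, ← monom_smul2_monom,
      expOp_smul2 hR hR (dserLinear_smul2 hψ), ih, expOp_dserLinear_letter hψ]
    rfl

theorem kappa_expS_sone {ψ : Ser (Option Γ) k} (hψ : ψ [] = 0) (H : Ser (Option Γ) k) :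
    kappa (expS ψ sone) H = expOp (dserLinear ψ) H := by
  funext u
  have h := linear_apply_eq_sum (LinearMap.proj u ∘ₗ expOp (dserLinear ψ)) (L := u.length)
    (fun K hK => hK.expOp (raises_dserLinear hψ) _ _ u (Nat.lt_succ_self _)) H
  simp only [LinearMap.comp_apply, LinearMap.proj_apply, expOp_dserLinear_monom hψ] at h
  exact h.symm

end Derivation

end Ser

/-- For ψ with zero constant term, `Exp(ψ) ⊛ H = exp(s_ψ)(H)`,
where `Exp(ψ) = exp(s_ψ)(1)` and `G ⊛ H = G · κ_G(H)`. -/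
theorem Exp_mulMT {Γ k : Type} [CommGroup Γ] [Fintype Γ] [DecidableEq Γ]
    [CommRing k] [Algebra ℚ k] (ψ : Ser (Option Γ) k) (hψ : ψ [] = 0)
    (H : Ser (Option Γ) k) :
    mulMT (expS ψ sone) H = expS ψ H := by
  rw [mulMT, Ser.kappa_expS_sone hψ, ← Ser.expS_eq_smul2 hψ]
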